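/- Let X be a set, H any hypothesis class on X, and U a perturbation function on X. With respect to U and the constrained-adversary loss ℓ_CA: (a) there exists a robustly-reliable learner L such that for every target h* ∈ H and every labeled sample S labeled by h*, RR^L(S) ⊇ Agree(H_0(S)); and (b) for every robustly-reliable learner L and every labeled sample S, RR^L(S) ⊆ Agree(H_0(S)). -/

import Mathlib

/-- `S` is labeled by `h` : every labeled pair in `S` carries the label `h` assigns. -/
def labeledBy {X : Type*} (S : List (X × Bool)) (h : X → Bool) : Prop :=
  ∀ p ∈ S, p.2 = h p.1

/-- Version space: hypotheses in `H` consistent with the sample `S`. -/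
def versionSpace {X : Type*} (H : Set (X → Bool)) (S : List (X × Bool)) : Set (X → Bool) :=
  {h ∈ H | ∀ p ∈ S, h p.1 = p.2}

/-- Agreement region of a set of hypotheses. -/
def agree {X : Type*} (G : Set (X → Bool)) : Set X :=
  {x | ∀ h₁ ∈ G, ∀ h₂ ∈ G, h₁ x = h₂ x}

/-- Constrained-adversary loss `ℓ_CA^{h*}(h,x,z)`. -/
def lossCA {X : Type*} (hs h : X → Bool) (x z : X) : ℕ :=
  if h z ≠ hs z ∧ hs z = hs x then 1 else 0

/-- A learner (`hyp`, `abst`) is robustly reliable w.r.t. a perturbation function `U`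
and loss `ℓ`: for every target `hs ∈ H` and every sample labeled by `hs`, whenever the
learner does not abstain at `z` and `z ∈ U x`, the loss `ℓ hs (hyp S) x z` vanishes. -/
def RobustlyReliableU {X : Type*} (H : Set (X → Bool)) (U : X → Set X)
    (ℓ : (X → Bool) → (X → Bool) → X → X → ℕ)
    (hyp : List (X × Bool) → X → Bool) (abst : List (X × Bool) → X → Bool) : Prop :=
  ∀ hs ∈ H, ∀ S : List (X × Bool), labeledBy S hs →
    ∀ x z : X, abst S z = true → z ∈ U x → ℓ hs (hyp S) x z = 0

/-- The robustly-reliable region: points where the learner does not abstain. -/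
def RRregionU {X : Type*} (abst : List (X × Bool) → X → Bool) (S : List (X × Bool)) : Set X :=
  {z | abst S z = true}

section Loss

variable {X : Type*} {hs h : X → Bool} {x z : X}

theorem lossCA_eq_zero_iff : lossCA hs h x z = 0 ↔ (hs z = hs x → h z = hs z) := by
  simp only [lossCA, ite_eq_right_iff, one_ne_zero, imp_false, not_and', not_not]

theorem lossCA_eq_zero_of_eq (hz : h z = hs z) : lossCA hs h x z = 0 :=
  lossCA_eq_zero_iff.mpr fun _ => hz

theorem lossCA_self_eq_zero_iff : lossCA hs h z z = 0 ↔ h z = hs z :=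
  lossCA_eq_zero_iff.trans (forall_prop_of_true rfl)

end Loss

section VersionSpace

variable {X : Type*} {H : Set (X → Bool)} {S : List (X × Bool)} {h : X → Bool}

theorem mem_versionSpace_iff : h ∈ versionSpace H S ↔ h ∈ H ∧ labeledBy S h :=
  and_congr_right fun _ => forall₂_congr fun _ _ => eq_comm

end VersionSpace

section Agreement

variable {X : Type*} {G : Set (X → Bool)} {h : X → Bool} {x : X}

open scoped Classical in
/-- The common label at `x` of the hypotheses in `G`, used as the prediction of the learner that
trusts exactly the agreement region. Off `agree G` the value is the maximum of the labels. -/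
noncomputable def commonLabel (G : Set (X → Bool)) (x : X) : Bool :=
  decide (∃ h ∈ G, h x = true)

open scoped Classical in
/-- The indicator function of the agreement region of `G`, used as an abstention function: `true`
means that the learner predicts, `false` that it abstains. -/
noncomputable def agreeIndicator (G : Set (X → Bool)) (x : X) : Bool :=
  decide (x ∈ agree G)

theorem commonLabel_eq_true_iff : commonLabel G x = true ↔ ∃ h ∈ G, h x = true := by
  simp only [commonLabel, decide_eq_true_iff]

theorem commonLabel_eq_of_mem_agree (hx : x ∈ agree G) (hh : h ∈ G) : commonLabel G x = h x := by
  rw [Bool.eq_iff_iff, commonLabel_eq_true_iff]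
  constructor
  · rintro ⟨g, hg, hgx⟩
    rwa [hx h hh g hg]
  · exact fun hhx => ⟨h, hh, hhx⟩

theorem agreeIndicator_eq_true_iff : agreeIndicator G x = true ↔ x ∈ agree G := by
  simp only [agreeIndicator, decide_eq_true_iff]

end Agreement

section Learner

variable {X : Type*} {H : Set (X → Bool)} {U : X → Set X}
  {ℓ : (X → Bool) → (X → Bool) → X → X → ℕ}

theorem RRregionU_agreeIndicator_versionSpace (H : Set (X → Bool)) (S : List (X × Bool)) :
    RRregionU (fun S => agreeIndicator (versionSpace H S)) S = agree (versionSpace H S) :=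
  Set.ext fun _ => agreeIndicator_eq_true_iff

theorem robustlyReliableU_commonLabel_agreeIndicator
    (hℓ : ∀ hs h x z, h z = hs z → ℓ hs h x z = 0) :
    RobustlyReliableU H U ℓ (fun S => commonLabel (versionSpace H S))
      (fun S => agreeIndicator (versionSpace H S)) := by
  intro hs hsH S hS x z hz _
  have target_mem : hs ∈ versionSpace H S := mem_versionSpace_iff.mpr ⟨hsH, hS⟩
  exact hℓ _ _ x z (commonLabel_eq_of_mem_agree (agreeIndicator_eq_true_iff.mp hz) target_mem)

variable {hyp abst : List (X × Bool) → X → Bool} {S : List (X × Bool)}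

-- Every consistent hypothesis is a possible target, and `z` is a perturbation of itself.
theorem RobustlyReliableU.hyp_eq_of_mem_versionSpace (hL : RobustlyReliableU H U ℓ hyp abst)
    (hℓ : ∀ hs h z, ℓ hs h z z = 0 → h z = hs z) {z : X} (hzU : z ∈ U z)
    (hz : z ∈ RRregionU abst S) {h : X → Bool} (hh : h ∈ versionSpace H S) :
    hyp S z = h z := by
  obtain ⟨hhH, hhS⟩ := mem_versionSpace_iff.mp hh
  exact hℓ h (hyp S) z (hL h hhH S hhS z z hz hzU)

theorem RobustlyReliableU.RRregionU_subset_agree (hL : RobustlyReliableU H U ℓ hyp abst)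
    (hℓ : ∀ hs h z, ℓ hs h z z = 0 → h z = hs z) (hU : ∀ x, x ∈ U x) :
    RRregionU abst S ⊆ agree (versionSpace H S) := by
  intro z hz h₁ hh₁ h₂ hh₂
  calc
    h₁ z = hyp S z := (hL.hyp_eq_of_mem_versionSpace hℓ (hU z) hz hh₁).symm
    _ = h₂ z := hL.hyp_eq_of_mem_versionSpace hℓ (hU z) hz hh₂

end Learner

/-- Theorem 3.6(a) (for `ℓ_CA`): for any perturbation function `U` (with `x ∈ U x`),
(a) there is a robustly-reliable learner w.r.t. `U` and `ℓ_CA` whose robustly-reliable region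
contains the agreement region of the version space, for every target `h* ∈ H` and every sample
labeled by it; (b) for every robustly-reliable learner and every sample, the robustly-reliable
region is contained in the agreement region of the version space. -/
theorem rr_region_eq_agreement_U_CA {X : Type*} (H : Set (X → Bool)) (U : X → Set X)
    (hU : ∀ x, x ∈ U x) :
    (∃ (hyp : List (X × Bool) → X → Bool) (abst : List (X × Bool) → X → Bool),
      RobustlyReliableU H U lossCA hyp abst ∧
      ∀ hs ∈ H, ∀ S : List (X × Bool), labeledBy S hs →
        agree (versionSpace H S) ⊆ RRregionU abst S) ∧
    (∀ (hyp : List (X × Bool) → X → Bool) (abst : List (X × Bool) → X → Bool),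
      RobustlyReliableU H U lossCA hyp abst →
      ∀ S : List (X × Bool), RRregionU abst S ⊆ agree (versionSpace H S)) := by
  constructor
  · refine ⟨_, _, robustlyReliableU_commonLabel_agreeIndicator fun _ _ _ _ => lossCA_eq_zero_of_eq,
      fun _ _ S _ => ?_⟩
    exact (RRregionU_agreeIndicator_versionSpace H S).superset
  · intro hyp abst hL S
    exact hL.RRregionU_subset_agree (fun _ _ _ => lossCA_self_eq_zero_iff.mp) hU
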